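/- (Authentication of the initiator in Needham–Schroeder–Lowe.) If evs ∈ nsl, A ∉ bad, B ∉ bad, Says B A (Crypt (pubK A) ⟨Nonce NA, Nonce NB, Agent B⟩) ∈ set evs and Says A' B (Crypt (pubK B) (Nonce NB)) ∈ set evs for some agent A', then Says A B (Crypt (pubK B) ⟨Nonce NA, Agent A⟩) ∈ set evs, i.e. the run must have been initiated by A. -/

import Mathlib

inductive agent : Type
  | Server : agent
  | Friend : ℕ → agent
  | Spy : agent
deriving DecidableEq

inductive msg : Type
  | Agent : agent → msg
  | Number : ℕ → msg
  | Nonce : ℕ → msg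
  | Key : ℕ → msg
  | Hash : msg → msg
  | MPair : msg → msg → msg
  | Crypt : ℕ → msg → msg
deriving DecidableEq

inductive partsP (H : Set msg) : msg → Prop
  | Inj : ∀ X, X ∈ H → partsP H X
  | Fst : ∀ X Y, partsP H (msg.MPair X Y) → partsP H X
  | Snd : ∀ X Y, partsP H (msg.MPair X Y) → partsP H Y
  | Body : ∀ K X, partsP H (msg.Crypt K X) → partsP H X

/-- `parts H`: sub-components of messages of `H`. -/
def parts (H : Set msg) : Set msg := {X | partsP H X}

inductive analzP (invKey : ℕ → ℕ) (H : Set msg) : msg → Prop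
  | Inj : ∀ X, X ∈ H → analzP invKey H X
  | Fst : ∀ X Y, analzP invKey H (msg.MPair X Y) → analzP invKey H X
  | Snd : ∀ X Y, analzP invKey H (msg.MPair X Y) → analzP invKey H Y
  | Decrypt : ∀ K X, analzP invKey H (msg.Crypt K X) →
      analzP invKey H (msg.Key (invKey K)) → analzP invKey H X

/-- `analz invKey H`: what can be obtained by decomposing and decrypting messages of `H`. -/
def analz (invKey : ℕ → ℕ) (H : Set msg) : Set msg := {X | analzP invKey H X}

inductive synthP (H : Set msg) : msg → Prop
  | Inj : ∀ X, X ∈ H → synthP H X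
  | Ag : ∀ a, synthP H (msg.Agent a)
  | Num : ∀ n, synthP H (msg.Number n)
  | Hsh : ∀ X, synthP H X → synthP H (msg.Hash X)
  | Pr : ∀ X Y, synthP H X → synthP H Y → synthP H (msg.MPair X Y)
  | Cry : ∀ K X, synthP H X → msg.Key K ∈ H → synthP H (msg.Crypt K X)

/-- `synth H`: messages that can be synthesized from `H`. -/
def synth (H : Set msg) : Set msg := {X | synthP H X}

inductive guardP (invKey : ℕ → ℕ) (n : ℕ) (Ks : Set ℕ) : msg → Prop
  | No_Nonce : ∀ X, msg.Nonce n ∉ parts {X} → guardP invKey n Ks X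
  | Guard : ∀ K X, invKey K ∈ Ks → guardP invKey n Ks (msg.Crypt K X)
  | Cry : ∀ K X, guardP invKey n Ks X → guardP invKey n Ks (msg.Crypt K X)
  | Pr : ∀ X Y, guardP invKey n Ks X → guardP invKey n Ks Y →
      guardP invKey n Ks (msg.MPair X Y)

/-- `guard n Ks`: messages in which `Nonce n` is guarded by the keys of `Ks`. -/
def guardMsg (invKey : ℕ → ℕ) (n : ℕ) (Ks : Set ℕ) : Set msg := {X | guardP invKey n Ks X}

/-- `Guard n Ks H`: every message of `H` lies in `guard n Ks`. -/
def Guard (invKey : ℕ → ℕ) (n : ℕ) (Ks : Set ℕ) (H : Set msg) : Prop :=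
  ∀ X ∈ H, X ∈ guardMsg invKey n Ks
inductive event : Type
  | Says : agent → agent → msg → event
deriving DecidableEq

def msgOf : event → msg
  | event.Says _ _ X => X

/-- Set of messages sent in a trace. -/
def sent (evs : List event) : Set msg :=
  {X | ∃ A B, event.Says A B X ∈ evs}
/-- Private key of an agent: the inverse of its public key. -/
def priK (invKey : ℕ → ℕ) (pubK : agent → ℕ) (A : agent) : ℕ := invKey (pubK A)

/-- Initial knowledge of each agent in a public-key infrastructure:
every agent knows its own private key and all public keys; the spy moreover
knows the private keys of the bad agents. -/
def initStatePK (invKey : ℕ → ℕ) (pubK : agent → ℕ) (bad : Set agent) : agent → Set msg :=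
  fun A =>
    match A with
    | agent.Spy =>
        {X | ∃ B ∈ bad, X = msg.Key (priK invKey pubK B)} ∪ {X | ∃ B, X = msg.Key (pubK B)}
    | _ => {msg.Key (priK invKey pubK A)} ∪ {X | ∃ B, X = msg.Key (pubK B)}

/-- `spies evs`: the private keys of the bad agents, all public keys, and
every message sent in `evs`. -/
def spiesPK (invKey : ℕ → ℕ) (pubK : agent → ℕ) (bad : Set agent) (evs : List event) :
    Set msg :=
  initStatePK invKey pubK bad agent.Spy ∪ sent evs

/-- `used evs`: parts of all agents' initial knowledge and of all messages sent in `evs`. -/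
def usedPK (invKey : ℕ → ℕ) (pubK : agent → ℕ) (bad : Set agent) (evs : List event) :
    Set msg :=
  parts ((⋃ A, initStatePK invKey pubK bad A) ∪ sent evs)
/-- The Needham–Schroeder–Lowe protocol. -/
inductive nsl (invKey : ℕ → ℕ) (pubK : agent → ℕ) (bad : Set agent) : List event → Prop
  | Nil : nsl invKey pubK bad []
  | Fake : ∀ evs B X, nsl invKey pubK bad evs →
      X ∈ synth (analz invKey (spiesPK invKey pubK bad evs)) →
      nsl invKey pubK bad (event.Says agent.Spy B X :: evs)
  | NS1 : ∀ evs A B NA, nsl invKey pubK bad evs →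
      msg.Nonce NA ∉ usedPK invKey pubK bad evs →
      nsl invKey pubK bad
        (event.Says A B (msg.Crypt (pubK B) (msg.MPair (msg.Nonce NA) (msg.Agent A))) :: evs)
  | NS2 : ∀ evs A A' B NA NB, nsl invKey pubK bad evs →
      msg.Nonce NB ∉ usedPK invKey pubK bad evs →
      event.Says A' B (msg.Crypt (pubK B) (msg.MPair (msg.Nonce NA) (msg.Agent A))) ∈ evs →
      nsl invKey pubK bad
        (event.Says B A (msg.Crypt (pubK A)
          (msg.MPair (msg.Nonce NA) (msg.MPair (msg.Nonce NB) (msg.Agent B)))) :: evs)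
  | NS3 : ∀ evs A B B' NA NB, nsl invKey pubK bad evs →
      event.Says A B (msg.Crypt (pubK B) (msg.MPair (msg.Nonce NA) (msg.Agent A))) ∈ evs →
      event.Says B' A (msg.Crypt (pubK A)
        (msg.MPair (msg.Nonce NA) (msg.MPair (msg.Nonce NB) (msg.Agent B)))) ∈ evs →
      nsl invKey pubK bad (event.Says A B (msg.Crypt (pubK B) (msg.Nonce NB)) :: evs)

/-!
Once `B` has sent `Crypt (pubK A) ⟨NA, NB, B⟩` to `A`, the nonce `NB` only ever occurs inside this
very ciphertext or inside `Crypt (pubK B) NB`, and the latter is sent only if `A` has started the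
run with `NA`. The spy cannot open either ciphertext, since the private keys of `A` and `B` never
leak. An honest agent releases `NB` only by answering `Crypt (pubK A) ⟨NA, NB, B⟩`, and the
name `B` in it (Lowe's fix) forces the answer to be `Crypt (pubK B) NB`, sent by `A` after its own
`Crypt (pubK B) ⟨NA, A⟩`.
-/

/-- `Confined a S X`: the nonce or key `a` occurs in `X` only inside ciphertexts belonging to `S`.
Hashes are opaque, as they are for `parts`. For `S = ∅` this says that `a` is not a part of `X`; for
`S` the ciphertexts under keys whose inverses lie in `Ks` it is the notion `guardMsg`. -/
def Confined (a : msg) (S : Set msg) : msg → Prop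
  | .Nonce n => msg.Nonce n ≠ a
  | .Key k => msg.Key k ≠ a
  | .MPair X Y => Confined a S X ∧ Confined a S Y
  | .Crypt K X => msg.Crypt K X ∈ S ∨ Confined a S X
  | _ => True

namespace Confined

variable {a : msg} {S T H : Set msg} {X : msg}

theorem mono (hST : S ⊆ T) (hX : Confined a S X) : Confined a T X := by
  induction X with
  | MPair X Y ihX ihY => exact ⟨ihX hX.1, ihY hX.2⟩
  | Crypt K X ih => exact hX.imp (@hST _) ih
  | _ => exact hX

theorem of_mem_parts (ha : a ∉ parts H) (hX : X ∈ parts H) : Confined a S X := by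
  induction X with
  | Nonce n => exact ne_of_mem_of_not_mem hX ha
  | Key k => exact ne_of_mem_of_not_mem hX ha
  | MPair X Y ihX ihY => exact ⟨ihX (.Fst _ _ hX), ihY (.Snd _ _ hX)⟩
  | Crypt K X ih => exact .inr (ih (.Body _ _ hX))
  | _ => trivial

theorem of_mem_analz {invKey : ℕ → ℕ}
    (hS : ∀ K X, msg.Crypt K X ∈ S → msg.Key (invKey K) ∉ analz invKey H)
    (hH : ∀ X ∈ H, Confined a S X) (hX : X ∈ analz invKey H) : Confined a S X := by
  induction hX with
  | Inj X hX => exact hH X hX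
  | Fst X Y _ ih => exact ih.1
  | Snd X Y _ ih => exact ih.2
  | Decrypt K X _ hK ih _ => exact ih.resolve_left fun hmem => hS K X hmem hK

theorem of_mem_synth (hH : ∀ X ∈ H, Confined a S X) (hX : X ∈ synth H) : Confined a S X := by
  induction hX with
  | Inj X hX => exact hH X hX
  | Pr X Y _ _ ihX ihY => exact ⟨ihX, ihY⟩
  | Cry K X _ _ ih => exact .inr ih
  | _ => trivial

end Confined

/-- First message of the protocol: the initiator `A` challenges `B` with the nonce `NA`. -/
abbrev challengeMsg (pubK : agent → ℕ) (A B : agent) (NA : ℕ) : msg :=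
  .Crypt (pubK B) (.MPair (.Nonce NA) (.Agent A))

/-- Second message of the protocol: the responder `B` returns the nonce `NA` of `A` together with
its own nonce `NB` and, following Lowe, its name. -/
abbrev replyMsg (pubK : agent → ℕ) (A B : agent) (NA NB : ℕ) : msg :=
  .Crypt (pubK A) (.MPair (.Nonce NA) (.MPair (.Nonce NB) (.Agent B)))

/-- Third message of the protocol: the nonce `NB` is returned to the responder `B`. -/
abbrev confirmMsg (pubK : agent → ℕ) (B : agent) (NB : ℕ) : msg :=
  .Crypt (pubK B) (.Nonce NB)

/-- The ciphertexts that may carry the nonce `NB` which `B` generated in reply to the challenge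
`NA` of `A`: the reply itself and, once `A` has sent that challenge, its confirmation. -/
def runCiphertexts (pubK : agent → ℕ) (A B : agent) (NA NB : ℕ) (evs : List event) : Set msg :=
  {X | X = replyMsg pubK A B NA NB ∨
    X = confirmMsg pubK B NB ∧ event.Says A B (challengeMsg pubK A B NA) ∈ evs}

section

variable {invKey : ℕ → ℕ} {pubK : agent → ℕ} {bad : Set agent} {evs : List event}
  {A B C D : agent} {NA NB : ℕ} {X : msg}

theorem forall_mem_spiesPK_cons {P : msg → Prop} :
    (∀ Y ∈ spiesPK invKey pubK bad (event.Says C D X :: evs), P Y) ↔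
      P X ∧ ∀ Y ∈ spiesPK invKey pubK bad evs, P Y := by
  constructor
  · refine fun h => ⟨h X (.inr ⟨C, D, List.mem_cons_self⟩), fun Y hY => h Y ?_⟩
    exact hY.imp_right fun ⟨E, F, hmem⟩ => ⟨E, F, List.mem_cons_of_mem _ hmem⟩
  · rintro ⟨hX, hevs⟩ Y (hY | ⟨E, F, hmem⟩)
    · exact hevs Y (.inl hY)
    · rcases List.mem_cons.1 hmem with heq | hmem
      · cases heq
        exact hX
      · exact hevs Y (.inr ⟨E, F, hmem⟩)

theorem spiesPK_subset_usedPK : spiesPK invKey pubK bad evs ⊆ usedPK invKey pubK bad evs :=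
  fun _ hX => .Inj _ (hX.imp_left (Set.mem_iUnion_of_mem agent.Spy))

theorem nonce_mem_usedPK_of_reply (hreply : event.Says C D (replyMsg pubK A B NA NB) ∈ evs) :
    msg.Nonce NB ∈ usedPK invKey pubK bad evs :=
  .Fst _ _ (.Snd _ _ (.Body _ _ (.Inj _ (.inr ⟨C, D, hreply⟩))))

theorem priK_confined_initStatePK (hpri : Function.Injective (priK invKey pubK))
    (hpubpri : ∀ A B : agent, pubK A ≠ priK invKey pubK B) (hA : A ∉ bad) :
    ∀ X ∈ initStatePK invKey pubK bad agent.Spy, Confined (.Key (priK invKey pubK A)) ∅ X := by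
  rintro X (⟨C, hC, rfl⟩ | ⟨C, rfl⟩) heq
  · exact hA (hpri (msg.Key.inj heq) ▸ hC)
  · exact hpubpri C A (msg.Key.inj heq)

theorem priK_confined_spiesPK (hpri : Function.Injective (priK invKey pubK))
    (hpubpri : ∀ A B : agent, pubK A ≠ priK invKey pubK B) (hA : A ∉ bad)
    (hevs : nsl invKey pubK bad evs) :
    ∀ X ∈ spiesPK invKey pubK bad evs, Confined (.Key (priK invKey pubK A)) ∅ X := by
  induction hevs with
  | Nil =>
    rintro X (hX | ⟨_, _, hmem⟩)
    · exact priK_confined_initStatePK hpri hpubpri hA X hX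
    · cases hmem
  | Fake evs C Y _ hY ih =>
    have hanalz : ∀ X ∈ analz invKey (spiesPK invKey pubK bad evs),
        Confined (.Key (priK invKey pubK A)) ∅ X :=
      fun _ => Confined.of_mem_analz (fun _ _ hmem => hmem.elim) ih
    exact forall_mem_spiesPK_cons.2 ⟨Confined.of_mem_synth hanalz hY, ih⟩
  | NS1 _ _ _ _ _ _ ih => exact forall_mem_spiesPK_cons.2 ⟨by simp [Confined], ih⟩
  | NS2 _ _ _ _ _ _ _ _ _ ih => exact forall_mem_spiesPK_cons.2 ⟨by simp [Confined], ih⟩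
  | NS3 _ _ _ _ _ _ _ _ _ ih => exact forall_mem_spiesPK_cons.2 ⟨by simp [Confined], ih⟩

theorem priK_notMem_analz_spiesPK (hpri : Function.Injective (priK invKey pubK))
    (hpubpri : ∀ A B : agent, pubK A ≠ priK invKey pubK B) (hA : A ∉ bad)
    (hevs : nsl invKey pubK bad evs) :
    msg.Key (priK invKey pubK A) ∉ analz invKey (spiesPK invKey pubK bad evs) := fun hmem =>
  Confined.of_mem_analz (fun _ _ h => h.elim) (priK_confined_spiesPK hpri hpubpri hA hevs) hmem rfl

theorem confined_of_mem_synth_analz_spiesPK (hpri : Function.Injective (priK invKey pubK))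
    (hpubpri : ∀ A B : agent, pubK A ≠ priK invKey pubK B) (hA : A ∉ bad) (hB : B ∉ bad)
    (hevs : nsl invKey pubK bad evs) {a : msg}
    (hspies : ∀ X ∈ spiesPK invKey pubK bad evs,
      Confined a (runCiphertexts pubK A B NA NB evs) X)
    (hX : X ∈ synth (analz invKey (spiesPK invKey pubK bad evs))) :
    Confined a (runCiphertexts pubK A B NA NB evs) X := by
  refine Confined.of_mem_synth (fun Y hY => Confined.of_mem_analz ?_ hspies hY) hX
  rintro K Z (heq | ⟨heq, -⟩) <;> cases heq
  · exact priK_notMem_analz_spiesPK hpri hpubpri hA hevs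
  · exact priK_notMem_analz_spiesPK hpri hpubpri hB hevs

theorem confined_runCiphertexts_cons {a : msg} {e : event}
    (hX : Confined a (runCiphertexts pubK A B NA NB evs) X) :
    Confined a (runCiphertexts pubK A B NA NB (e :: evs)) X :=
  hX.mono fun _ hY => hY.imp_right (.imp_right (List.mem_cons_of_mem e))

theorem confined_spiesPK_cons {a : msg}
    (hX : Confined a (runCiphertexts pubK A B NA NB evs) X)
    (hspies : ∀ Y ∈ spiesPK invKey pubK bad evs,
      Confined a (runCiphertexts pubK A B NA NB evs) Y) :
    ∀ Y ∈ spiesPK invKey pubK bad (event.Says C D X :: evs),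
      Confined a (runCiphertexts pubK A B NA NB (event.Says C D X :: evs)) Y :=
  forall_mem_spiesPK_cons.2
    ⟨confined_runCiphertexts_cons hX, fun Y hY => confined_runCiphertexts_cons (hspies Y hY)⟩

theorem ne_of_confined_challenge {N : ℕ}
    (h : Confined (.Nonce NB) (runCiphertexts pubK A B NA NB evs) (challengeMsg pubK C D N)) :
    msg.Nonce N ≠ .Nonce NB := by
  rcases h with (heq | ⟨heq, -⟩) | hconf
  · simp at heq
  · simp at heq
  · exact hconf.1

theorem confined_confirm_of_reply (hpub : Function.Injective pubK) {N₁ N₂ : ℕ}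
    (hchallenge : event.Says C D (challengeMsg pubK C D N₁) ∈ evs)
    (hreply : Confined (.Nonce NB) (runCiphertexts pubK A B NA NB evs)
      (replyMsg pubK C D N₁ N₂)) :
    Confined (.Nonce NB) (runCiphertexts pubK A B NA NB evs) (confirmMsg pubK D N₂) := by
  rcases hreply with (heq | ⟨heq, -⟩) | hconf
  · injection heq with hkey hbody
    obtain rfl := hpub hkey
    cases hbody
    exact .inl (.inr ⟨rfl, hchallenge⟩)
  · simp at heq
  · exact .inr hconf.2.1

theorem nonce_confined_runCiphertexts (hpri : Function.Injective (priK invKey pubK))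
    (hpubpri : ∀ A B : agent, pubK A ≠ priK invKey pubK B) (hspy : agent.Spy ∈ bad)
    (hA : A ∉ bad) (hB : B ∉ bad) (hevs : nsl invKey pubK bad evs)
    (hreply : event.Says B A (replyMsg pubK A B NA NB) ∈ evs) :
    ∀ X ∈ spiesPK invKey pubK bad evs,
      Confined (.Nonce NB) (runCiphertexts pubK A B NA NB evs) X := by
  induction hevs with
  | Nil => cases hreply
  | Fake evs C Y hevs hY ih =>
    rcases List.mem_cons.1 hreply with heq | hreply
    · cases heq
      exact absurd hspy hB
    · exact confined_spiesPK_cons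
        (confined_of_mem_synth_analz_spiesPK hpri hpubpri hA hB hevs (ih hreply) hY) (ih hreply)
  | NS1 evs C D N _ hfresh ih =>
    obtain ⟨⟨⟩⟩ | hreply := List.mem_cons.1 hreply
    have hne : msg.Nonce N ≠ .Nonce NB :=
      (ne_of_mem_of_not_mem (nonce_mem_usedPK_of_reply hreply) hfresh).symm
    exact confined_spiesPK_cons (.inr ⟨hne, trivial⟩) (ih hreply)
  | NS2 evs C C' D N₁ N₂ _ hfresh hchallenge ih =>
    rcases List.mem_cons.1 hreply with heq | hreply
    · cases heq
      exact confined_spiesPK_cons (.inl (.inl rfl))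
        fun X hX => Confined.of_mem_parts hfresh (spiesPK_subset_usedPK hX)
    · have hne₁ : msg.Nonce N₁ ≠ .Nonce NB :=
        ne_of_confined_challenge (ih hreply _ (.inr ⟨_, _, hchallenge⟩))
      have hne₂ : msg.Nonce N₂ ≠ .Nonce NB :=
        (ne_of_mem_of_not_mem (nonce_mem_usedPK_of_reply hreply) hfresh).symm
      exact confined_spiesPK_cons (.inr ⟨hne₁, hne₂, trivial⟩) (ih hreply)
  | NS3 evs C D D' N₁ N₂ _ hchallenge hreply' ih =>
    obtain ⟨⟨⟩⟩ | hreply := List.mem_cons.1 hreply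
    have hpub : Function.Injective pubK := hpri.of_comp
    exact confined_spiesPK_cons
      (confined_confirm_of_reply hpub hchallenge (ih hreply _ (.inr ⟨_, _, hreply'⟩))) (ih hreply)

end

/-- Authentication of the initiator in Needham–Schroeder–Lowe. -/
theorem nsl_authentication
    (invKey : ℕ → ℕ) (pubK : agent → ℕ) (bad : Set agent)
    (hinv : ∀ K, invKey (invKey K) = K)
    (hpub : Function.Injective pubK)
    (hpri : Function.Injective (priK invKey pubK))
    (hpubpri : ∀ A B : agent, pubK A ≠ priK invKey pubK B)
    (hspy : agent.Spy ∈ bad)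
    (evs : List event) (A A' B : agent) (NA NB : ℕ)
    (hevs : nsl invKey pubK bad evs) (hA : A ∉ bad) (hB : B ∉ bad)
    (h2 : event.Says B A (msg.Crypt (pubK A)
      (msg.MPair (msg.Nonce NA) (msg.MPair (msg.Nonce NB) (msg.Agent B)))) ∈ evs)
    (h3 : event.Says A' B (msg.Crypt (pubK B) (msg.Nonce NB)) ∈ evs) :
    event.Says A B (msg.Crypt (pubK B) (msg.MPair (msg.Nonce NA) (msg.Agent A))) ∈ evs := by
  have hconfined : Confined (.Nonce NB) (runCiphertexts pubK A B NA NB evs)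
      (confirmMsg pubK B NB) :=
    nonce_confined_runCiphertexts hpri hpubpri hspy hA hB hevs h2 _ (.inr ⟨A', B, h3⟩)
  rcases hconfined with (heq | ⟨-, hchallenge⟩) | hne
  · simp at heq
  · exact hchallenge
  · exact absurd rfl hne
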